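/- arXiv:2504.04821 — 6 statements merged into one kernel-verified Lean document; each statement's English description precedes it below -/
import Mathlib

section
/- (Negative pruning.) Let G be a simple graph on a finite vertex set V, let S ⊆ V be such that the subgraph of G induced on S has chromatic number at least k, and let u, v be distinct nonadjacent vertices with S ⊆ N(u) ∪ N(v). Then the graph G / (u,v) obtained by identifying u and v has chromatic number at least k + 1; in particular G / (u,v) is not k-colorable. -/
/-!
In any graph, a coloring restricted to the neighborhood of a vertex misses the color of that vertex,
so the neighborhood needs one color fewer than the whole graph. When `u` and `v` are nonadjacent, a
set `S ⊆ N(u) ∪ N(v)` contains neither of them, so it survives unchanged in `G / (u,v)`, where it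
lies in the neighborhood of the merged vertex.
-/

open SimpleGraph

/-- The graph `G / (u,v)` obtained by identifying the nonadjacent vertices `u` and `v`:
the vertex `u` is removed and the vertex `v` (representing the merged vertex) becomes
adjacent to `N(u) ∪ N(v)`. -/
def SimpleGraph.contractPair {V : Type*} (G : SimpleGraph V) (u v : V) :
    SimpleGraph {x : V // x ≠ u} :=
  SimpleGraph.fromRel (fun a b =>
    G.Adj a.1 b.1 ∨ (a.1 = v ∧ G.Adj u b.1) ∨ (b.1 = v ∧ G.Adj a.1 u))

section Neighborhood

variable {V : Type*} {G : SimpleGraph V}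

theorem colorable_induce_neighborSet {n : ℕ} (hG : G.Colorable (n + 1)) (w : V) :
    (G.induce (G.neighborSet w)).Colorable n := by
  obtain ⟨C⟩ := hG
  let D : (G.induce (G.neighborSet w)).Coloring {c : Fin (n + 1) // c ≠ C w} :=
    Coloring.mk (fun x => ⟨C x, (C.valid x.2).symm⟩)
      fun hadj heq => C.valid hadj (congrArg Subtype.val heq)
  simpa only [Fintype.card_subtype_compl, Fintype.card_fin, Fintype.card_unique,
    Nat.add_sub_cancel] using D.colorable

theorem chromaticNumber_induce_neighborSet_add_one_le (G : SimpleGraph V) (w : V) :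
    (G.induce (G.neighborSet w)).chromaticNumber + 1 ≤ G.chromaticNumber := by
  refine le_iInf₂ fun m hm => ?_
  cases m with
  | zero => exact ((colorable_zero_iff.mp hm).false w).elim
  | succ n =>
    rw [Nat.cast_add_one]
    gcongr
    exact (colorable_induce_neighborSet hm w).chromaticNumber_le

end Neighborhood

section ContractPair

variable {V : Type*} {G : SimpleGraph V} {u v : V}

theorem comap_val_le_contractPair (G : SimpleGraph V) (u v : V) :
    G.comap Subtype.val ≤ G.contractPair u v :=
  fun _ _ hadj => (fromRel_adj _ _ _).mpr ⟨hadj.ne, .inl (.inl hadj)⟩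

theorem contractPair_adj_merged_iff (huv : u ≠ v) (hnadj : ¬ G.Adj u v) (x : {x : V // x ≠ u}) :
    (G.contractPair u v).Adj ⟨v, huv.symm⟩ x ↔ G.Adj u x ∨ G.Adj v x := by
  have hne (h : G.Adj u x ∨ G.Adj v x) : (⟨v, huv.symm⟩ : {x : V // x ≠ u}) ≠ x := by
    rintro rfl
    exact h.elim hnadj G.irrefl
  rw [contractPair, fromRel_adj]
  grind [G.adj_comm]

theorem notMem_of_subset_neighborSet_union {S : Set V} (hnadj : ¬ G.Adj u v)
    (hcover : S ⊆ G.neighborSet u ∪ G.neighborSet v) : u ∉ S := fun hu =>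
  (hcover hu).elim (G.irrefl ·) (hnadj ·.symm)

theorem negative_pruning_general {S : Set V} (huv : u ≠ v) (hnadj : ¬ G.Adj u v)
    (hcover : S ⊆ G.neighborSet u ∪ G.neighborSet v) :
    (G.induce S).chromaticNumber + 1 ≤ (G.contractPair u v).chromaticNumber := by
  let merged : {x : V // x ≠ u} := ⟨v, huv.symm⟩
  have ne_u (x : S) : x.1 ≠ u :=
    ne_of_mem_of_not_mem x.2 (notMem_of_subset_neighborSet_union hnadj hcover)
  let inclusion : G.induce S →g
      (G.contractPair u v).induce ((G.contractPair u v).neighborSet merged) :=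
    { toFun x := ⟨⟨x, ne_u x⟩, (contractPair_adj_merged_iff huv hnadj _).mpr (hcover x.2)⟩
      map_rel' hadj := comap_val_le_contractPair G u v hadj }
  calc (G.induce S).chromaticNumber + 1
      ≤ ((G.contractPair u v).induce
          ((G.contractPair u v).neighborSet merged)).chromaticNumber + 1 := by
        gcongr
        exact chromaticNumber_mono_of_hom inclusion
    _ ≤ (G.contractPair u v).chromaticNumber :=
        chromaticNumber_induce_neighborSet_add_one_le _ merged

end ContractPair

/-- Negative pruning: if the subgraph induced on `S` has chromatic number at least `k`
and `u`, `v` are distinct nonadjacent vertices with `S ⊆ N(u) ∪ N(v)`, then `G / (u,v)`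
has chromatic number at least `k + 1`; in particular it is not `k`-colorable. -/
theorem negative_pruning {V : Type*} [Fintype V] (G : SimpleGraph V)
    (S : Set V) (k : ℕ) (hS : (k : ℕ∞) ≤ (G.induce S).chromaticNumber)
    (u v : V) (huv : u ≠ v) (hnadj : ¬ G.Adj u v)
    (hcover : S ⊆ G.neighborSet u ∪ G.neighborSet v) :
    ((k : ℕ∞) + 1) ≤ (G.contractPair u v).chromaticNumber ∧
      ¬ (G.contractPair u v).Colorable k := by
  have hle := (add_le_add_left hS 1).trans (negative_pruning_general huv hnadj hcover)
  exact ⟨hle, fun hcol =>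
    (hle.trans hcol.chromaticNumber_le).not_gt ENat.natCast_lt_succ⟩
end

section
/- (Positive-pruning propagation.) Let G be a simple graph on a finite vertex set V, let S ⊆ V be such that the subgraph of G induced on S has chromatic number at least k, and let v ∈ V \ S be a vertex such that S \ N(v) = {u} for some vertex u. Then every proper k-coloring f of G satisfies f(u) = f(v). -/
open SimpleGraph

/-!
A proper `k`-coloring uses every color on `S`, since omitting one would color the subgraph induced
on `S` with `k - 1` colors. In particular some vertex of `S` has the color of `v`; it is not a
neighbor of `v`, so it can only be `u`.
-/

section

variable {V α : Type*} [Fintype α] {G : SimpleGraph V} {S : Set V}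

theorem coloring_surjOn_of_card_le_chromaticNumber_induce
    (hS : (Fintype.card α : ℕ∞) ≤ (G.induce S).chromaticNumber) (f : G.Coloring α) :
    Set.SurjOn f S Set.univ := by
  have domRestrict_surjective : Function.Surjective (S.domRestrict f) :=
    card_le_chromaticNumber_iff_forall_surjective.mp hS (f.comp (Embedding.induce S).toHom)
  exact Set.surjOn_iff_surjective.mpr domRestrict_surjective

theorem positive_pruning_propagation_general
    (hS : (Fintype.card α : ℕ∞) ≤ (G.induce S).chromaticNumber) (f : G.Coloring α) (v : V) :
    f v ∈ f '' (S \ G.neighborSet v) := by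
  obtain ⟨x, hxS, hfx⟩ :=
    coloring_surjOn_of_card_le_chromaticNumber_induce hS f (Set.mem_univ (f v))
  have not_adj : ¬ G.Adj v x := fun hadj => f.valid hadj hfx.symm
  exact ⟨x, ⟨hxS, not_adj⟩, hfx⟩

end

/-- Positive-pruning propagation: if the subgraph induced on `S` has chromatic number
at least `k`, `v ∉ S`, and `S \ N(v) = {u}`, then every proper `k`-coloring `f` of `G`
satisfies `f u = f v`. -/
theorem positive_pruning_propagation {V : Type*} [Fintype V] (G : SimpleGraph V)
    (S : Set V) (k : ℕ) (hS : (k : ℕ∞) ≤ (G.induce S).chromaticNumber)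
    (u v : V) (hv : v ∉ S) (hu : S \ G.neighborSet v = {u}) :
    ∀ f : G.Coloring (Fin k), f u = f v := by
  intro f
  obtain ⟨_, rfl, color_eq⟩ := hu ▸ positive_pruning_propagation_general (by simpa using hS) f v
  exact color_eq
end

section
/- (Negative-pruning propagation.) Let G be a simple graph on a finite vertex set V, let S ⊆ V be such that the subgraph of G induced on S has chromatic number at least k, and let u, v be two vertices with S ⊆ N(u) ∪ N(v). Then every proper k-coloring f of G satisfies f(u) ≠ f(v). -/
open SimpleGraph

section ColoringInduce

variable {V α : Type*} [Fintype α] {G : SimpleGraph V} {S : Set V}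

theorem exists_mem_coloring_eq_of_card_le_chromaticNumber_induce
    (hS : (Fintype.card α : ℕ∞) ≤ (G.induce S).chromaticNumber) (f : G.Coloring α) (c : α) :
    ∃ s ∈ S, f s = c := by
  have hsurj : Function.Surjective (f.comp (Embedding.induce S).toHom) :=
    card_le_chromaticNumber_iff_forall_surjective.mp hS _
  obtain ⟨⟨s, hs⟩, hfs⟩ := hsurj c
  exact ⟨s, hs, hfs⟩

theorem negative_pruning_propagation_general
    (hS : (Fintype.card α : ℕ∞) ≤ (G.induce S).chromaticNumber)
    {T : Set V} (hcover : S ⊆ ⋃ t ∈ T, G.neighborSet t) (f : G.Coloring α) (c : α) :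
    ∃ t ∈ T, f t ≠ c := by
  obtain ⟨s, hs, rfl⟩ := exists_mem_coloring_eq_of_card_le_chromaticNumber_induce hS f c
  obtain ⟨t, ht, hts : G.Adj t s⟩ := Set.mem_iUnion₂.mp (hcover hs)
  exact ⟨t, ht, f.valid hts⟩

end ColoringInduce

/-- Negative-pruning propagation: if the subgraph induced on `S` has chromatic number
at least `k` and `u`, `v` are vertices with `S ⊆ N(u) ∪ N(v)`, then every proper
`k`-coloring `f` of `G` satisfies `f u ≠ f v`. -/
theorem negative_pruning_propagation {V : Type*} [Fintype V] (G : SimpleGraph V)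
    (S : Set V) (k : ℕ) (hS : (k : ℕ∞) ≤ (G.induce S).chromaticNumber)
    (u v : V) (hcover : S ⊆ G.neighborSet u ∪ G.neighborSet v) :
    ∀ f : G.Coloring (Fin k), f u ≠ f v := by
  intro f
  simpa using negative_pruning_propagation_general (T := {u, v}) (by simpa using hS)
    (by simpa only [Set.biUnion_pair] using hcover) f (f v)
end

section
/- (Correctness of the full Zykov encoding.) Let G be a simple graph on the vertex set {1,…,n} and let k ≥ 1. Then G is k-colorable if and only if there exists a symmetric relation e on {1,…,n} such that: (i) e(u,v) is false for every edge {u,v} of G; (ii) for all vertices u, v, w, if e(u,v) and e(v,w) then e(u,w); and (iii) the number of vertices v such that e(u,v) is false for every u < v is at most k. -/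
open SimpleGraph

/-!
The classes of an equivalence relation on a well-order are counted by the vertices that come first
in their class. For the relation of having the same color, the coloring is injective on these
vertices, so there are at most `k` of them. Conversely, if adjacent vertices are never related, then
coloring each vertex by the first vertex of its class is proper. Since the relation of the encoding
need not be reflexive, its classes are those of its reflexive closure.
-/

section

open Relation (ReflGen)

variable {V α : Type*} {r : V → V → Prop}

/-- The vertices not related to any earlier one. When `r` is an equivalence relation on a
well-order, these are the first elements of the classes of `r`, one for each class. -/
def leaders [LT V] (r : V → V → Prop) : Set V :=
  {v | ∀ u < v, ¬ r u v}

theorem exists_mem_leaders_reflGen [LT V] [WellFoundedLT V] [IsTrans V r] (v : V) :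
    ∃ u ∈ leaders r, ReflGen r u v := by
  obtain ⟨u, huv, hmin⟩ := wellFounded_lt.has_min {u | ReflGen r u v} ⟨v, .refl⟩
  exact ⟨u, fun w hwu hrwu => hmin w (_root_.trans (ReflGen.single hrwu) huv) hwu, huv⟩

theorem injOn_leaders_ker [LinearOrder V] (f : V → α) :
    Set.InjOn f (leaders fun u v => f u = f v) := by
  intro u hu v hv huv
  rcases lt_trichotomy u v with hlt | heq | hgt
  · exact absurd huv (hv u hlt)
  · exact heq
  · exact absurd huv.symm (hu v hgt)

theorem encard_leaders_ker_le [LinearOrder V] (f : V → α) :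
    (leaders fun u v => f u = f v).encard ≤ ENat.card α :=
  (injOn_leaders_ker f).encard_image.symm.trans_le Set.encard_le_card

theorem not_reflGen_of_adj {G : SimpleGraph V} (hadj : ∀ u v, G.Adj u v → ¬ r u v) {u v : V}
    (huv : G.Adj u v) : ¬ ReflGen r u v := by
  rintro (_ | hruv)
  · exact G.irrefl huv
  · exact hadj u v huv hruv

theorem nonempty_coloring_leaders [LT V] [WellFoundedLT V] [Std.Symm r] [IsTrans V r]
    {G : SimpleGraph V} (hadj : ∀ u v, G.Adj u v → ¬ r u v) :
    Nonempty (G.Coloring (leaders r)) := by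
  choose leader hmem hrel using exists_mem_leaders_reflGen (r := r)
  refine ⟨Coloring.mk (fun v => ⟨leader v, hmem v⟩) fun {u v} huv heq => ?_⟩
  have hleader : leader u = leader v := congrArg Subtype.val heq
  have hleader_v : ReflGen r (leader u) v := hleader ▸ hrel v
  exact not_reflGen_of_adj hadj huv (_root_.trans (symm (hrel u)) hleader_v)

theorem colorable_of_coloring_of_encard_le {G : SimpleGraph V} {s : Set α} {k : ℕ}
    (C : G.Coloring s) (hs : s.encard ≤ k) : G.Colorable k := by
  have := (Set.finite_of_encard_le_coe hs).fintype
  rw [← Set.coe_fintypeCard, Nat.cast_le] at hs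
  exact C.colorable.mono hs

theorem surjective_boolRel_to_rel :
    Function.Surjective fun (e : V → α → Bool) u v => e u v = true :=
  Equiv.propEquivBool.symm.surjective.comp_left.comp_left

theorem zykov_encoding_correct_general [LinearOrder V] [WellFoundedLT V] (G : SimpleGraph V)
    (k : ℕ) :
    G.Colorable k ↔
      ∃ r : V → V → Prop,
        (∀ u v, r u v ↔ r v u) ∧
        (∀ u v, G.Adj u v → ¬ r u v) ∧
        (∀ u v w, r u v → r v w → r u w) ∧
        (leaders r).encard ≤ k := by
  constructor
  · rintro ⟨C⟩
    exact ⟨fun u v => C u = C v, fun _ _ => eq_comm, fun _ _ => C.valid, fun _ _ _ => Eq.trans,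
      by simpa using encard_leaders_ker_le C⟩
  · rintro ⟨r, hsymm, hadj, htrans, hcard⟩
    have : Std.Symm r := ⟨fun u v => (hsymm u v).mp⟩
    have : IsTrans V r := ⟨htrans⟩
    obtain ⟨C⟩ := nonempty_coloring_leaders hadj
    exact colorable_of_coloring_of_encard_le C hcard

end

/-- Correctness of the full Zykov encoding: `G` on vertex set `{1,…,n}` is `k`-colorable
iff there is a symmetric Boolean relation `e` that is false on edges, transitive, and
such that the number of vertices `v` with `e u v` false for all `u < v` is at most `k`. -/
theorem zykov_encoding_correct {n k : ℕ} (G : SimpleGraph (Fin n)) (hk : 1 ≤ k) :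
    G.Colorable k ↔
      ∃ e : Fin n → Fin n → Bool,
        (∀ u v : Fin n, e u v = e v u) ∧
        (∀ u v : Fin n, G.Adj u v → e u v = false) ∧
        (∀ u v w : Fin n, e u v = true → e v w = true → e u w = true) ∧
        (Finset.univ.filter
          (fun v : Fin n => ∀ u : Fin n, u < v → e u v = false)).card ≤ k := by
  rw [zykov_encoding_correct_general, surjective_boolRel_to_rel.exists]
  simp [leaders, Set.encard_eq_coe_toFinset_card]
end

section
/- (Correctness of the symmetry-breaking constraints.) Let G be a simple graph on the vertex set {1,…,n} and let k ≥ 1. Then G is k-colorable if and only if there exists a proper k-coloring f : {1,…,n} → {1,…,k} of G such that f(v) ≤ v for every vertex v. -/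
/-!
Relabel the colors of a proper coloring in order of first appearance: the new color of `v` is the
number of colors occurring strictly before the first vertex `m ≤ v` that has the color of `v`.
There are at most as many such colors as vertices before `v`, and the color of `v` is not among
them, so no additional color is needed. The relabeling is injective on colors because a color that
first appears earlier is counted for every color that first appears later.
-/

open SimpleGraph

section FirstOccurrence

variable {V α : Type*} [LinearOrder V] [WellFoundedLT V]

/-- The least index at which `f` takes the value `f v`; comparing these indices orders the values of
`f` by first appearance. -/
noncomputable def firstOccurrence (f : V → α) (v : V) : V :=
  wellFounded_lt.min {w | f w = f v} ⟨v, rfl⟩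

theorem apply_firstOccurrence (f : V → α) (v : V) : f (firstOccurrence f v) = f v :=
  wellFounded_lt.min_mem {w | f w = f v} ⟨v, rfl⟩

theorem firstOccurrence_le_of_apply_eq {f : V → α} {v w : V} (h : f w = f v) :
    firstOccurrence f v ≤ w :=
  wellFounded_lt.min_le (s := {x | f x = f v}) h

theorem firstOccurrence_le (f : V → α) (v : V) : firstOccurrence f v ≤ v :=
  firstOccurrence_le_of_apply_eq rfl

theorem apply_notMem_image_Iio_firstOccurrence (f : V → α) (v : V) :
    f v ∉ f '' Set.Iio (firstOccurrence f v) := by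
  rintro ⟨w, hw, hwv⟩
  exact (firstOccurrence_le_of_apply_eq hwv).not_gt hw

/-- The position, counted from `0`, of the value `f v` when the values of `f` are listed in order
of first appearance. It is meaningful only if finitely many values precede `f v` in that list, as
`Set.ncard` of an infinite set is `0`. -/
noncomputable def appearanceRank (f : V → α) (v : V) : ℕ :=
  (f '' Set.Iio (firstOccurrence f v)).ncard

theorem appearanceRank_le_encard_Iio (f : V → α) (v : V) :
    (appearanceRank f v : ℕ∞) ≤ (Set.Iio v).encard :=
  calc (appearanceRank f v : ℕ∞)
    _ ≤ (f '' Set.Iio (firstOccurrence f v)).encard := Set.ncard_le_encard _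
    _ ≤ (Set.Iio (firstOccurrence f v)).encard := Set.encard_image_le f _
    _ ≤ (Set.Iio v).encard := Set.encard_le_encard (Set.Iio_subset_Iio (firstOccurrence_le f v))

variable [Finite α]

theorem appearanceRank_lt_card (f : V → α) (v : V) : appearanceRank f v < Nat.card α :=
  Set.ncard_lt_card
    ((Set.ne_univ_iff_exists_notMem _).2 ⟨f v, apply_notMem_image_Iio_firstOccurrence f v⟩)

theorem appearanceRank_lt_of_firstOccurrence_lt {f : V → α} {u v : V}
    (h : firstOccurrence f u < firstOccurrence f v) : appearanceRank f u < appearanceRank f v := by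
  have subset : f '' Set.Iio (firstOccurrence f u) ⊆ f '' Set.Iio (firstOccurrence f v) :=
    Set.image_mono (Set.Iio_subset_Iio h.le)
  have mem : f u ∈ f '' Set.Iio (firstOccurrence f v) :=
    ⟨firstOccurrence f u, h, apply_firstOccurrence f u⟩
  exact Set.ncard_lt_ncard
    ((Set.ssubset_iff_of_subset subset).2 ⟨f u, mem, apply_notMem_image_Iio_firstOccurrence f u⟩)

theorem apply_eq_of_appearanceRank_eq {f : V → α} {u v : V}
    (h : appearanceRank f u = appearanceRank f v) : f u = f v := by
  have first_eq : firstOccurrence f u = firstOccurrence f v := by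
    rcases lt_trichotomy (firstOccurrence f u) (firstOccurrence f v) with lt | eq | gt
    · exact absurd h (appearanceRank_lt_of_firstOccurrence_lt lt).ne
    · exact eq
    · exact absurd h (appearanceRank_lt_of_firstOccurrence_lt gt).ne'
  rw [← apply_firstOccurrence f u, first_eq, apply_firstOccurrence f v]

end FirstOccurrence

theorem encard_Iio_fin {n : ℕ} (v : Fin n) : (Set.Iio v).encard = (v : ℕ) := by
  rw [← Finset.coe_Iio, Set.encard_coe_eq_coe_finsetCard, Fin.card_Iio]

theorem symmetry_breaking_correct_general {V : Type*} [LinearOrder V] [WellFoundedLT V] {k : ℕ}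
    (G : SimpleGraph V) :
    G.Colorable k ↔
      ∃ C : G.Coloring (Fin k), ∀ v : V, ((C v : ℕ) : ℕ∞) ≤ (Set.Iio v).encard := by
  refine ⟨?_, fun ⟨C, _⟩ ↦ ⟨C⟩⟩
  rintro ⟨C⟩
  have rank_lt (v : V) : appearanceRank C v < k :=
    (appearanceRank_lt_card C v).trans_eq (Nat.card_fin k)
  let relabeled : G.Coloring (Fin k) :=
    Coloring.mk (fun v ↦ ⟨appearanceRank C v, rank_lt v⟩) fun adj eq ↦
      C.valid adj (apply_eq_of_appearanceRank_eq (Fin.val_eq_of_eq eq))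
  exact ⟨relabeled, appearanceRank_le_encard_Iio C⟩

/-- Correctness of the symmetry-breaking constraints: `G` on vertex set `{1,…,n}` is
`k`-colorable iff there is a proper `k`-coloring `C` with `C v ≤ v` for every vertex `v`
(vertices and colors both numbered starting from the same index). -/
theorem symmetry_breaking_correct {n k : ℕ} (G : SimpleGraph (Fin n)) (hk : 1 ≤ k) :
    G.Colorable k ↔
      ∃ C : G.Coloring (Fin k), ∀ v : Fin n, (C v : ℕ) ≤ (v : ℕ) := by
  simpa only [encard_Iio_fin, Nat.cast_le] using symmetry_breaking_correct_general G
end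

section
/- (Mycielski's theorem on the chromatic number.) Let G be a simple graph on a finite vertex set. Then the Mycielskian μ(G) satisfies χ(μ(G)) = χ(G) + 1. -/
open SimpleGraph

/-- The Mycielskian of a simple graph `G` on vertex set `V`: its vertex set is
`V ⊕ V ⊕ Unit` (a first copy of `V`, a second copy of `V`, and an extra vertex `w`),
with edges `u_x u_y` and `u_x v_y` for every edge `{x,y}` of `G`,
and `v_x w` for every `x ∈ V`. -/
def SimpleGraph.mycielskian {V : Type*} (G : SimpleGraph V) :
    SimpleGraph (V ⊕ V ⊕ Unit) :=
  SimpleGraph.fromRel (fun a b =>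
    match a, b with
    | Sum.inl x, Sum.inl y => G.Adj x y
    | Sum.inl x, Sum.inr (Sum.inl y) => G.Adj x y
    | Sum.inr (Sum.inl _), Sum.inr (Sum.inr _) => True
    | _, _ => False)

/-!
The point is that `μ(G)` is `(n + 1)`-colorable if and only if `G` is `n`-colorable. An
`n`-coloring of `G` extends to `μ(G)` by giving `u_x` and `v_x` the color of `x`, and `w` a new
color. Conversely, given a coloring of `μ(G)`, recolor each `u_x` that has the color of `w` with the
color of `v_x`. This frees the color of `w`, and remains proper on the first copy of `G`: no two
adjacent vertices are both recolored, and `v_x` is adjacent to all the neighbors of `u_x` in that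
copy.
-/

section Mycielskian

variable {V α : Type*} {G : SimpleGraph V} {x y : V}

@[simp]
theorem mycielskian_adj_inl_inl : G.mycielskian.Adj (.inl x) (.inl y) ↔ G.Adj x y := by
  simpa [mycielskian, G.adj_comm y x] using Adj.ne

@[simp]
theorem mycielskian_adj_inl_inr_inl :
    G.mycielskian.Adj (.inl x) (.inr (.inl y)) ↔ G.Adj x y := by
  simp [mycielskian]

@[simp]
theorem not_mycielskian_adj_inl_inr_inr (w : Unit) :
    ¬G.mycielskian.Adj (.inl x) (.inr (.inr w)) := by
  simp [mycielskian]

@[simp]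
theorem not_mycielskian_adj_inr_inl_inr_inl :
    ¬G.mycielskian.Adj (.inr (.inl x)) (.inr (.inl y)) := by
  simp [mycielskian]

@[simp]
theorem mycielskian_adj_inr_inl_inr_inr (w : Unit) :
    G.mycielskian.Adj (.inr (.inl x)) (.inr (.inr w)) := by
  simp [mycielskian]

/-- The extension to the Mycielskian of a coloring of `G`: both copies of a vertex keep its color,
and the extra vertex receives the new color `none`. -/
def mycielskianColoring (c : G.Coloring α) : G.mycielskian.Coloring (Option α) :=
  Coloring.mk (Sum.elim (some ∘ c) (Sum.elim (some ∘ c) fun _ ↦ none)) <| by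
    rintro (x | x | _) (y | y | _) h <;> simp_all [adj_comm, c.valid]

open Classical in
/-- The coloring of `G` induced by a coloring `c` of its Mycielskian: a vertex takes the color of
its first copy, or that of its second copy if the first one has the color of the extra vertex.
That color is thus avoided, which the type of colors records. -/
noncomputable def coloringOfMycielskian (c : G.mycielskian.Coloring α) :
    G.Coloring {a : α // a ≠ c (.inr (.inr ()))} :=
  Coloring.mk
    (fun x ↦ if hx : c (.inl x) = c (.inr (.inr ())) then
        ⟨c (.inr (.inl x)), c.valid (mycielskian_adj_inr_inl_inr_inr ())⟩
      else ⟨c (.inl x), hx⟩) <| by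
    intro x y hxy
    have first_ne_first : c (.inl x) ≠ c (.inl y) := c.valid (mycielskian_adj_inl_inl.2 hxy)
    have first_ne_second : c (.inl x) ≠ c (.inr (.inl y)) :=
      c.valid (mycielskian_adj_inl_inr_inl.2 hxy)
    have second_ne_first : c (.inr (.inl x)) ≠ c (.inl y) :=
      (c.valid (mycielskian_adj_inl_inr_inl.2 hxy.symm)).symm
    split_ifs with hx hy hy <;> rw [Ne, Subtype.mk.injEq]
    · exact absurd (hx.trans hy.symm) first_ne_first
    · exact second_ne_first
    · exact first_ne_second
    · exact first_ne_first

theorem mycielskian_colorable_succ_iff {n : ℕ} :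
    G.mycielskian.Colorable (n + 1) ↔ G.Colorable n := by
  constructor
  · rintro ⟨c⟩
    exact ⟨recolorOfEquiv G (finSuccAboveEquiv _).symm (coloringOfMycielskian c)⟩
  · rintro ⟨c⟩
    simpa using (mycielskianColoring c).colorable

theorem mycielskian_chromaticNumber_general (G : SimpleGraph V) :
    G.mycielskian.chromaticNumber = G.chromaticNumber + 1 := by
  refine eq_of_forall_ge_iff fun k ↦ ?_
  induction k with
  | top => simp only [le_top]
  | coe k =>
    cases k with
    | zero => simp [chromaticNumber_eq_zero_iff]
    | succ n =>
      calc
        G.mycielskian.chromaticNumber ≤ (n + 1 : ℕ)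
        _ ↔ G.mycielskian.Colorable (n + 1) := chromaticNumber_le_iff_colorable
        _ ↔ G.Colorable n := mycielskian_colorable_succ_iff
        _ ↔ G.chromaticNumber ≤ n := chromaticNumber_le_iff_colorable.symm
        _ ↔ G.chromaticNumber + 1 ≤ (n + 1 : ℕ) := by
          rw [Nat.cast_succ, ENat.add_le_add_iff_right ENat.one_ne_top]

end Mycielskian

/-- Mycielski's theorem: the Mycielskian increases the chromatic number by exactly one. -/
theorem mycielskian_chromaticNumber {V : Type*} [Fintype V] (G : SimpleGraph V) :
    G.mycielskian.chromaticNumber = G.chromaticNumber + 1 :=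
  mycielskian_chromaticNumber_general G
end
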